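/- Truncated addition is monotone in the truncation parameter in the following sense: for N-bit binary numbers x, y and integers 0 ≤ m ≤ m', if x +_m y ≡ x + y (mod 2^N) then x +_{m'} y ≡ x + y (mod 2^N). -/

import Mathlib

/-!
A truncated carry never exceeds the full carry `tcarry i x y i`, whose window is all of `[0, i)`,
and it grows with the window. Both are bits, and the full carries are exactly the ones that turn the
digits of `x` and `y` into those of `x + y`. By uniqueness of binary expansions the `m`-truncated
sum is therefore correct modulo `2 ^ N` iff every `m`-truncated carry below position `N` is full, a
property that passes to any `m' ≥ m` because the `m'`-truncated carry is squeezed in between.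
-/

/-- The `i`-th binary digit of `x`. -/
def bitd (x i : ℕ) : ℕ := (x / 2 ^ i) % 2

open Classical in
/-- The `m`-truncated carry bit at position `i`: it is 1 iff there is
`i - m ≤ j < i` with `(x_j, y_j) = (1,1)` and `x_k + y_k = 1` for all `j < k < i`. -/
noncomputable def tcarry (m x y i : ℕ) : ℕ :=
  if ∃ j, i - m ≤ j ∧ j < i ∧ bitd x j = 1 ∧ bitd y j = 1 ∧
      (∀ k, j < k → k < i → bitd x k + bitd y k = 1) then 1 else 0

/-- The `m`-truncated addition of `N`-bit numbers: the bitwise xor of `x`, `y`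
and the truncated carry array. -/
noncomputable def tadd (N m x y : ℕ) : ℕ :=
  ∑ i ∈ Finset.range N, ((bitd x i + bitd y i + tcarry m x y i) % 2) * 2 ^ i

lemma ofDigits_map_range {R : Type*} [Semiring R] (b : R) (N : ℕ) (a : ℕ → ℕ) :
    Nat.ofDigits b ((List.range N).map a) = ∑ i ∈ Finset.range N, (a i : R) * b ^ i := by
  induction N generalizing a with
  | zero => rfl
  | succ N ih =>
    rw [List.range_succ_eq_map, List.map_cons, List.map_map, Nat.ofDigits, ih,
      Finset.sum_range_succ', Finset.mul_sum, add_comm]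
    simp [pow_succ', (Nat.cast_commute _ b).symm.left_comm]

lemma sum_range_mul_pow_inj {b N : ℕ} {a a' : ℕ → ℕ} (hb : 1 < b)
    (ha : ∀ i < N, a i < b) (ha' : ∀ i < N, a' i < b) :
    ∑ i ∈ Finset.range N, a i * b ^ i = ∑ i ∈ Finset.range N, a' i * b ^ i ↔
      ∀ i < N, a i = a' i := by
  refine ⟨fun h ↦ ?_, fun h ↦ Finset.sum_congr rfl fun i hi ↦ by rw [h i (Finset.mem_range.mp hi)]⟩
  have hdigits : (List.range N).map a = (List.range N).map a' := by
    refine Nat.ofDigits_inj_of_len_eq hb (by simp) (by simpa using ha) (by simpa using ha') ?_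
    simpa only [ofDigits_map_range, Nat.cast_id] using h
  simpa using hdigits

lemma sum_range_div_pow_mod_mul_pow (b x N : ℕ) :
    ∑ i ∈ Finset.range N, x / b ^ i % b * b ^ i = x % b ^ N := by
  induction N with
  | zero => simp [Nat.mod_one]
  | succ N ih => rw [Finset.sum_range_succ, ih, Nat.mod_pow_succ, mul_comm]

section Carry

variable (m x y i : ℕ)

lemma bitd_lt_two : bitd x i < 2 := Nat.mod_lt _ two_pos

lemma sum_range_bitd_mul_two_pow (N : ℕ) :
    ∑ i ∈ Finset.range N, bitd x i * 2 ^ i = x % 2 ^ N :=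
  sum_range_div_pow_mod_mul_pow 2 x N

lemma tcarry_eq_one_iff :
    tcarry m x y i = 1 ↔ ∃ j, i - m ≤ j ∧ j < i ∧ bitd x j = 1 ∧ bitd y j = 1 ∧
      ∀ k, j < k → k < i → bitd x k + bitd y k = 1 := by
  simp [tcarry]

lemma tcarry_le_one : tcarry m x y i ≤ 1 := by
  unfold tcarry
  split_ifs <;> simp

lemma tcarry_zero_right : tcarry m x y 0 = 0 := by
  simp [tcarry]

variable {m i} in
/-- Comparing window starts covers both `m ≤ m'` and `i ≤ m'`, where `i - m'` truncates to `0`. -/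
lemma tcarry_le_tcarry {m' : ℕ} (h : i - m' ≤ i - m) : tcarry m x y i ≤ tcarry m' x y i := by
  have himp : tcarry m x y i = 1 → tcarry m' x y i = 1 := by
    simp only [tcarry_eq_one_iff]
    rintro ⟨j, hj, hgen⟩
    exact ⟨j, h.trans hj, hgen⟩
  have := tcarry_le_one m x y i
  omega

lemma tcarry_mono : Monotone fun m ↦ tcarry m x y i :=
  fun _ _ h ↦ tcarry_le_tcarry x y (Nat.sub_le_sub_left h i)

lemma tcarry_le_tcarry_self : tcarry m x y i ≤ tcarry i x y i :=
  tcarry_le_tcarry x y (by simp)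

lemma tcarry_succ_succ_eq_one_iff :
    tcarry (m + 1) x y (i + 1) = 1 ↔
      bitd x i = 1 ∧ bitd y i = 1 ∨ bitd x i + bitd y i = 1 ∧ tcarry m x y i = 1 := by
  simp only [tcarry_eq_one_iff]
  constructor
  · rintro ⟨j, hmj, hji, hxj, hyj, hprop⟩
    obtain rfl | hji : j = i ∨ j < i := by omega
    · exact .inl ⟨hxj, hyj⟩
    · exact .inr ⟨hprop i hji i.lt_succ_self,
        j, by omega, hji, hxj, hyj, fun k hjk hki ↦ hprop k hjk (by omega)⟩
  · rintro (⟨hxi, hyi⟩ | ⟨hi, j, hmj, hji, hxj, hyj, hprop⟩)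
    · exact ⟨i, by omega, i.lt_succ_self, hxi, hyi, by omega⟩
    · refine ⟨j, by omega, by omega, hxj, hyj, fun k hjk hki ↦ ?_⟩
      obtain rfl | hki : k = i ∨ k < i := by omega
      · exact hi
      · exact hprop k hjk hki

lemma tcarry_succ_succ :
    tcarry (m + 1) x y (i + 1) = (bitd x i + bitd y i + tcarry m x y i) / 2 := by
  have hiff := tcarry_succ_succ_eq_one_iff m x y i
  have hsucc := tcarry_le_one (m + 1) x y (i + 1)
  have hcarry := tcarry_le_one m x y i
  have hxi := bitd_lt_two x i
  have hyi := bitd_lt_two y i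
  omega

lemma add_div_two_pow_eq_add_tcarry :
    (x + y) / 2 ^ i = x / 2 ^ i + y / 2 ^ i + tcarry i x y i := by
  induction i with
  | zero => simp [tcarry_zero_right]
  | succ i ih =>
    simp only [tcarry_succ_succ, pow_succ, ← Nat.div_div_eq_div_mul, ih, bitd]
    omega

lemma bitd_add : bitd (x + y) i = (bitd x i + bitd y i + tcarry i x y i) % 2 := by
  simp only [bitd, add_div_two_pow_eq_add_tcarry]
  omega

theorem tadd_eq_add_mod_two_pow_iff (N : ℕ) :
    tadd N m x y = (x + y) % 2 ^ N ↔ ∀ i < N, tcarry m x y i = tcarry i x y i := by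
  rw [tadd, ← sum_range_bitd_mul_two_pow, sum_range_mul_pow_inj one_lt_two
    (fun i _ ↦ Nat.mod_lt _ two_pos) (fun i _ ↦ bitd_lt_two (x + y) i)]
  refine forall₂_congr fun i _ ↦ ?_
  have hm := tcarry_le_one m x y i
  have hi := tcarry_le_one i x y i
  rw [bitd_add]
  omega

end Carry

/-- monotonicity in the truncation parameter: if the `m`-truncated sum
agrees with ordinary addition mod `2^N`, then so does the `m'`-truncated sum for any
`m' ≥ m`. -/
theorem tadd_agree_mono (N m m' x y : ℕ) (hmm : m ≤ m') (hx : x < 2 ^ N) (hy : y < 2 ^ N)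
    (h : tadd N m x y = (x + y) % 2 ^ N) :
    tadd N m' x y = (x + y) % 2 ^ N := by
  rw [tadd_eq_add_mod_two_pow_iff] at h ⊢
  intro i hi
  refine le_antisymm (tcarry_le_tcarry_self m' x y i) ?_
  calc tcarry i x y i = tcarry m x y i := (h i hi).symm
    _ ≤ tcarry m' x y i := tcarry_mono x y i hmm
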